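/- Let V be a nonempty Gotzmann set of monomials of degree d in K[x_1,…,x_n] with gcd(V) = 1 and V ≠ M^d. Then there exists i ∈ {1, 2, …, n} satisfying all of the following: (i) K_i(V) is a Gotzmann set of K[x_1,…,x_n], D_i(V) is a Gotzmann set of the polynomial ring K[x_1,…,x_{i−1},x_{i+1},…,x_n] in n−1 variables (i.e. |\overline{M_i} D_i(V)| = |D_i(V)|^{<n−2>}), and |D_i(V)| < |V|_{<<n−1>>}; (ii) x_i D_i(V) ⊆ \overline{M_i} K_i(V); (iii) (|K_i(V)|^{<n−1>})^{<n−1>} + (|D_i(V)|^{<n−2>})^{<n−2>} = (|V|^{<n−1>})^{<n−1>}. -/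

import Mathlib

/-! For a fixed variable `x_i` write `h = |V|`, `a = |K_i(V)|`, `b = |D_i(V)|`, so `h = a + b`, and let
`m + 2` be the number of variables.  The part of the shadow `MV` free of `x_i` contains the shadow
of `D_i(V)` in the other variables; the part divisible by `x_i` contains both `x_i V` and the shadow
of `K_i(V)`.  Everything is read off from these inclusions and three facts on binomial
representations:

* `macUp_eq`: `h^{<m+1>} = h + (h_{<<m+1>>})^{<m>}`;
* `macUp_mixed`: if `a + b ≤ a^{<m+1>}` (which holds when `b < h_{<<m+1>>}`), then
  `h^{<m+1>} ≤ a^{<m+1>} + b^{<m>}`;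
* `macUp_mixed_persist`: an equality in the second fact persists when `^{<·>}` is applied once more.

The first two give Macaulay's bound `|MV| ≥ |V|^{<m+1>}` by induction (`macUp_card_le`): if
`b ≥ h_{<<m+1>>}` use `x_i V`, otherwise use the shadow of `K_i(V)`.  For a Gotzmann set and an
index with `b < h_{<<m+1>>}`, all these inequalities are equalities, so `K_i(V)` and `D_i(V)` are
Gotzmann, `x_i D_i(V)` lies in the shadow of `K_i(V)`, and persistence gives the last identity.
If no such index existed, then for every `i` the part of `MV` divisible by `x_i` would be exactly
`x_i V`.  Then `V` would be closed under replacing a variable by another one, hence would consist of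
all monomials of its degree.

The numerical facts come from the function `h ↦ h_{<<m>>}` (`lastFree`), which grows by `0` or `1`
at each step and whose behaviour on the block `[C(β+1, m+1), C(β+2, m+1)]` is a translate of that of
the function with index `m`.  An induction over blocks shows that, among windows of a given length,
its increase is largest at the beginning (`Subadd`) and, inside `[0, C(α, m)]`, smallest at the end
(`FinalMin`).  This implies `lastFree_mixed`, `h_{<<m+1>>} ≤ a_{<<m+1>>} + b_{<<m>>}`.  Iterating it
through `macUp_eq` yields the two-term inequality; in the equality case each of the iterated
inequalities is an equality, which is why equality persists.
-/

open Finset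

/-- `macUp n h` is `h^{<n>}`, computed via the greedy (Macaulay) binomial
representation `h = C(a_n, n) + C(a_{n-1}, n-1) + ⋯` (equivalently
`h = C(h(n)+n, n) + ⋯ + C(h(i)+i, i)` with `h(n) ≥ ⋯ ≥ h(i) ≥ 0`), giving
`h^{<n>} = C(a_n+1, n) + C(a_{n-1}+1, n-1) + ⋯`; `macUp n 0 = 0`, `macUp 0 1 = 1`. -/
def macUp : ℕ → ℕ → ℕ
  | 0, h => h
  | n+1, h =>
    if h = 0 then 0
    else
      let a := Nat.findGreatest (fun a => Nat.choose a (n+1) ≤ h) (h + n + 1)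
      Nat.choose (a+1) (n+1) + macUp n (h - Nat.choose a (n+1))
/-- `macDDown n h` is `h_{<<n>>} = C(a_n-1, n-1) + C(a_{n-1}-1, n-2) + ⋯` where
`h = C(a_n, n) + C(a_{n-1}, n-1) + ⋯` is the `n`th binomial representation;
`macDDown n 0 = 0` and `macDDown 0 1 = 1`. -/
def macDDown : ℕ → ℕ → ℕ
  | 0, h => h
  | n+1, h =>
    if h = 0 then 0
    else
      let a := Nat.findGreatest (fun a => Nat.choose a (n+1) ≤ h) (h + n + 1)
      Nat.choose (a-1) n + macDDown n (h - Nat.choose a (n+1))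
/-- Monomials in `K[x_1,…,x_n]` are identified with their exponent vectors
`Fin n → ℕ`; the degree of `v` is `∑ i, v i`.  `shad V` is the set
`MV = {x_j v : v ∈ V, 1 ≤ j ≤ n}`. -/
def shad {n : ℕ} (V : Finset (Fin n → ℕ)) : Finset (Fin n → ℕ) :=
  (Finset.univ ×ˢ V).image fun p => p.2 + Pi.single p.1 1
/-- `mulVar i V` is `x_i V = {x_i v : v ∈ V}`. -/
def mulVar {n : ℕ} (i : Fin n) (V : Finset (Fin n → ℕ)) : Finset (Fin n → ℕ) :=
  V.image fun v => v + Pi.single i 1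
/-- `shadExcept i W` is `\overline{M_i} W = {x_j w : w ∈ W, j ≠ i}`. -/
def shadExcept {n : ℕ} (i : Fin n) (W : Finset (Fin n → ℕ)) : Finset (Fin n → ℕ) :=
  ((Finset.univ.erase i) ×ˢ W).image fun p => p.2 + Pi.single p.1 1
/-- `gcd(V)` of a set of monomials: the exponentwise minimum. -/
noncomputable def gcdMon {n : ℕ} (V : Finset (Fin n → ℕ)) : Fin n → ℕ :=
  fun i => sInf ((fun v => v i) '' (V : Set (Fin n → ℕ)))
open Classical in
/-- `K_i(V)`: for `|V| ≤ 1` it is `V`; otherwise the set of monomials of `V`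
divisible by `x_i · gcd(V)`. -/
noncomputable def Kset {n : ℕ} (V : Finset (Fin n → ℕ)) (i : Fin n) : Finset (Fin n → ℕ) :=
  if V.card ≤ 1 then V
  else V.filter fun v => ∀ j, gcdMon V j + (Pi.single i 1 : Fin n → ℕ) j ≤ v j

/-- `D_i(V) = V \ K_i(V)`. -/
noncomputable def Dset {n : ℕ} (V : Finset (Fin n → ℕ)) (i : Fin n) : Finset (Fin n → ℕ) :=
  V \ Kset V i

/-- The function `h ↦ h_{<<m>>}`, changed at `m = 0` to be identically zero.  With this convention
`lastFree m h` counts, for every `m`, the monomials not divisible by the last of `m + 1` variables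
in a lexicographic segment of size `h` (of sufficiently large degree). -/
def lastFree : ℕ → ℕ → ℕ
  | 0, _ => 0
  | m + 1, h => macDDown (m + 1) h

/-! ### Blocks of the binomial representation -/

lemma le_choose_aux (m k : ℕ) : k + 1 ≤ (m + 1 + k).choose (m + 1) := by
  induction k with
  | zero => simp
  | succ k ih =>
    have h := Nat.choose_succ_succ' (m + 1 + k) m
    have h2 : 0 < (m + 1 + k).choose m := Nat.choose_pos (by omega)
    rw [← add_assoc, h]; omega

lemma findGreatest_block {m β r : ℕ} (hβ : m ≤ β) (hr : r < (β + 1).choose m) :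
    Nat.findGreatest (fun a => Nat.choose a (m + 1) ≤ (β + 1).choose (m + 1) + r)
      ((β + 1).choose (m + 1) + r + m + 1) = β + 1 := by
  rw [Nat.findGreatest_eq_iff]
  refine ⟨?_, fun _ => Nat.le_add_right _ _, fun n hn _ hc => ?_⟩
  · obtain ⟨k, rfl⟩ := Nat.exists_eq_add_of_le hβ
    have := le_choose_aux m k
    rw [show m + 1 + k = m + k + 1 by ring] at this
    omega
  · have h1 : (β + 1 + 1).choose (m + 1) ≤ n.choose (m + 1) := Nat.choose_le_choose _ hn
    rw [Nat.choose_succ_succ'] at h1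
    omega

lemma macUp_zero_right (m : ℕ) : macUp m 0 = 0 := by cases m <;> simp [macUp]

lemma lastFree_zero_right (m : ℕ) : lastFree m 0 = 0 := by
  cases m <;> simp [lastFree, macDDown]

lemma macUp_block_lt {m β r : ℕ} (hβ : m ≤ β) (hr : r < (β + 1).choose m) :
    macUp (m + 1) ((β + 1).choose (m + 1) + r) = (β + 1 + 1).choose (m + 1) + macUp m r := by
  have h0 : 0 < (β + 1).choose (m + 1) := Nat.choose_pos (by omega)
  rw [macUp, if_neg (by omega)]
  simp only [findGreatest_block hβ hr]
  simp

lemma lastFree_block_lt {m β r : ℕ} (hβ : m ≤ β) (hr : r < (β + 1).choose m) :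
    lastFree (m + 1) ((β + 1).choose (m + 1) + r) = β.choose m + lastFree m r := by
  have h0 : 0 < (β + 1).choose (m + 1) := Nat.choose_pos (by omega)
  rw [lastFree, macDDown, if_neg (by omega)]
  simp only [findGreatest_block hβ hr]
  rcases m with _ | m
  · simp [macDDown, lastFree] at hr ⊢
    exact hr
  · simp [lastFree]

lemma macUp_choose {m β : ℕ} (hβ : m ≤ β) : macUp m (β.choose m) = (β + 1).choose m := by
  rcases m with _ | m
  · simp [macUp]
  · obtain ⟨β, rfl⟩ : ∃ b, β = b + 1 := ⟨β - 1, by omega⟩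
    have := macUp_block_lt (m := m) (β := β) (r := 0) (by omega) (Nat.choose_pos (by omega))
    simpa [macUp_zero_right] using this

lemma lastFree_choose {m β : ℕ} (hβ : m ≤ β) :
    lastFree (m + 1) ((β + 1).choose (m + 1)) = β.choose m := by
  have := lastFree_block_lt (m := m) (β := β) (r := 0) (by omega) (Nat.choose_pos (by omega))
  simpa [lastFree_zero_right] using this

/-- The two descriptions of a point shared by consecutive blocks agree, so the block formula is
valid up to and including the right end of the block. -/
lemma macUp_block {m β r : ℕ} (hβ : m ≤ β) (hr : r ≤ (β + 1).choose m) :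
    macUp (m + 1) ((β + 1).choose (m + 1) + r) = (β + 1 + 1).choose (m + 1) + macUp m r := by
  rcases hr.lt_or_eq with h | rfl
  · exact macUp_block_lt hβ h
  · rw [macUp_choose (by omega), Nat.add_comm (Nat.choose _ _), ← Nat.choose_succ_succ',
      macUp_choose (by omega), Nat.choose_succ_succ' (β + 1 + 1), Nat.add_comm (Nat.choose _ _)]

/-- See `macUp_block`. -/
lemma lastFree_block {m β r : ℕ} (hβ : m ≤ β) (hr : r ≤ (β + 1).choose m) :
    lastFree (m + 1) ((β + 1).choose (m + 1) + r) = β.choose m + lastFree m r := by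
  rcases hr.lt_or_eq with h | rfl
  · exact lastFree_block_lt hβ h
  · rw [Nat.add_comm (Nat.choose _ _), ← Nat.choose_succ_succ', lastFree_choose (by omega)]
    rcases m with _ | m
    · simp [lastFree]
    · rw [lastFree_choose (by omega), Nat.choose_succ_succ', add_comm]

lemma exists_block_lt (m : ℕ) {h : ℕ} (hh : 1 ≤ h) :
    ∃ β r, m ≤ β ∧ r < (β + 1).choose m ∧ h = (β + 1).choose (m + 1) + r := by
  induction h, hh using Nat.le_induction with
  | base => exact ⟨m, 0, le_rfl, Nat.choose_pos (by omega), by simp⟩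
  | succ h _ ih =>
    obtain ⟨β, r, h1, h2, h3⟩ := ih
    by_cases h4 : r + 1 < (β + 1).choose m
    · exact ⟨β, r + 1, h1, h4, by omega⟩
    · refine ⟨β + 1, 0, by omega, Nat.choose_pos (by omega), ?_⟩
      rw [Nat.choose_succ_succ']; omega

lemma exists_block_pos (m : ℕ) {h : ℕ} (hh : 2 ≤ h) :
    ∃ β r, m ≤ β ∧ 1 ≤ r ∧ r ≤ (β + 1).choose m ∧ h = (β + 1).choose (m + 1) + r := by
  obtain ⟨β, r, h1, h2, h3⟩ := exists_block_lt m (h := h - 1) (by omega)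
  exact ⟨β, r + 1, h1, by omega, h2, by omega⟩

lemma lastFree_one (m : ℕ) : lastFree (m + 1) 1 = 1 := by
  simpa using lastFree_choose (le_refl m)

lemma lastFree_succ (m h : ℕ) :
    lastFree m h ≤ lastFree m (h + 1) ∧ lastFree m (h + 1) ≤ lastFree m h + 1 := by
  induction m generalizing h with
  | zero => simp [lastFree]
  | succ m ih =>
    rcases Nat.eq_zero_or_pos h with rfl | hh
    · simp [lastFree_one, lastFree_zero_right]
    · obtain ⟨β, r, h1, h2, rfl⟩ := exists_block_lt m hh
      rw [add_assoc, lastFree_block (r := r + 1) h1 h2, lastFree_block h1 h2.le]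
      have : lastFree m r ≤ lastFree m (r + 1) ∧ lastFree m (r + 1) ≤ lastFree m r + 1 := ih r
      omega

lemma lastFree_mono (m : ℕ) : Monotone (lastFree m) :=
  monotone_nat_of_le_succ fun h => (lastFree_succ m h).1

lemma lastFree_add_le (m h k : ℕ) : lastFree m (h + k) ≤ lastFree m h + k := by
  induction k with
  | zero => simp
  | succ k ih =>
    have := (lastFree_succ m (h + k)).2
    rw [← add_assoc]; omega

lemma lastFree_le (m h : ℕ) : lastFree m h ≤ h := by
  have := lastFree_add_le m 0 h
  simpa [lastFree_zero_right] using this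

/-- Numerically: the shadow of a lexicographic segment consists of its product with the last
variable and of the shadow, in the remaining variables, of the monomials free of that variable. -/
lemma macUp_eq (m h : ℕ) : macUp (m + 1) h = h + macUp m (lastFree (m + 1) h) := by
  induction m generalizing h with
  | zero =>
    rcases Nat.eq_zero_or_pos h with rfl | hh
    · simp [macUp_zero_right, lastFree_zero_right]
    · obtain ⟨β, r, h1, h2, rfl⟩ := exists_block_lt 0 hh
      rw [macUp_block h1 h2.le, lastFree_block h1 h2.le]
      simp [macUp, lastFree]; omega
  | succ m ih =>
    rcases Nat.eq_zero_or_pos h with rfl | hh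
    · simp [macUp_zero_right, lastFree_zero_right]
    · obtain ⟨β, r, h1, h2, rfl⟩ := exists_block_lt (m + 1) hh
      rw [macUp_block h1 h2.le, lastFree_block h1 h2.le, ih r]
      obtain ⟨β, rfl⟩ : ∃ b, β = b + 1 := ⟨β - 1, by omega⟩
      have h3 : lastFree (m + 1) r ≤ (β + 1).choose m := by
        rw [← lastFree_choose (show m ≤ β + 1 by omega)]
        exact lastFree_mono _ h2.le
      rw [macUp_block (by omega) h3, Nat.choose_succ_succ' (β + 1 + 1)]
      omega

lemma macUp_strictMono (m : ℕ) : StrictMono (macUp m) := by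
  induction m with
  | zero => intro a b h; simpa [macUp] using h
  | succ m ih =>
    intro a b h
    have h1 := ih.monotone (lastFree_mono (m + 1) h.le)
    rw [macUp_eq, macUp_eq]; omega

lemma lastFree_macUp (m x : ℕ) :
    lastFree (m + 1) (macUp (m + 1) x) = macUp m (lastFree (m + 1) x) := by
  induction m generalizing x with
  | zero =>
    rcases Nat.eq_zero_or_pos x with rfl | hh
    · simp [macUp_zero_right, lastFree_zero_right]
    · obtain ⟨β, r, h1, h2, rfl⟩ := exists_block_lt 0 hh
      have h3 : r = 0 := by simpa using h2
      subst h3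
      rw [macUp_block h1 h2.le, lastFree_block h1 h2.le, lastFree_block (by omega) (by simp [macUp])]
      simp [macUp, lastFree]
  | succ m ih =>
    rcases Nat.eq_zero_or_pos x with rfl | hh
    · simp [macUp_zero_right, lastFree_zero_right]
    · obtain ⟨β, r, h1, h2, rfl⟩ := exists_block_lt (m + 1) hh
      have h4 : macUp (m + 1) r ≤ (β + 1 + 1).choose (m + 1) := by
        rw [← macUp_choose (show m + 1 ≤ β + 1 by omega)]
        exact (macUp_strictMono _).monotone h2.le
      rw [macUp_block h1 h2.le, lastFree_block h1 h2.le, lastFree_block (by omega) h4, ih]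
      obtain ⟨β, rfl⟩ : ∃ b, β = b + 1 := ⟨β - 1, by omega⟩
      have h3 : lastFree (m + 1) r ≤ (β + 1).choose m := by
        rw [← lastFree_choose (show m ≤ β + 1 by omega)]
        exact lastFree_mono _ h2.le
      rw [macUp_block (by omega) h3]

/-! ### Subadditivity -/

/-- The last `t` places before `C(α, m)` carry the smallest possible increase of `lastFree m` among
all windows of length `t` below `C(α, m)`. -/
def FinalMin (m : ℕ) : Prop :=
  ∀ α s t u, m ≤ α → t + u = α.choose m → s ≤ u →
    lastFree m (t + u) + lastFree m s ≤ lastFree m (s + t) + lastFree m u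

/-- `lastFree m` is subadditive: the first `y` places carry the largest possible increase among all
windows of length `y`. -/
def Subadd (m : ℕ) : Prop :=
  ∀ x y, lastFree m (x + y) ≤ lastFree m x + lastFree m y

lemma finalMin_succ {m : ℕ} (hT : FinalMin m) (hS : Subadd m) : FinalMin (m + 1) := by
  intro α s t u hα
  induction α, hα using Nat.le_induction generalizing s t u with
  | base =>
    intro h1 h2
    rw [Nat.choose_self] at h1
    rcases Nat.eq_zero_or_pos t with rfl | ht
    · simp [add_comm]
    · obtain rfl : u = 0 := by omega
      obtain rfl : s = 0 := by omega
      simp [add_comm]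
  | succ α hα ihα =>
    obtain ⟨β, rfl⟩ : ∃ b, α = b + 1 := ⟨α - 1, by omega⟩
    induction t using Nat.strong_induction_on generalizing s u with
    | _ t iht =>
    intro h1 h2
    have hN := Nat.choose_succ_succ' (β + 1) m
    by_cases htB : (β + 1).choose m < t
    · -- The last block is a proper part of the window: split it off.
      obtain ⟨t', rfl⟩ := Nat.exists_eq_add_of_lt htB
      have e1 := ihα s (t' + 1) u (by omega) h2
      have e2 := iht ((β + 1).choose m) (by omega) (s + (t' + 1)) ((β + 1).choose (m + 1))
        (by omega) (by omega)
      rw [show (β + 1).choose m + (β + 1).choose (m + 1)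
        = (β + 1).choose m + t' + 1 + u by omega] at e2
      rw [show s + (t' + 1) + (β + 1).choose m = s + ((β + 1).choose m + t' + 1) by omega] at e2
      rw [show t' + 1 + u = (β + 1).choose (m + 1) by omega] at e1
      omega
    · obtain ⟨u', rfl⟩ : ∃ u', u = (β + 1).choose (m + 1) + u' :=
        ⟨u - (β + 1).choose (m + 1), by omega⟩
      rcases Nat.eq_zero_or_pos t with rfl | ht
      · simp [add_comm]
      have ht1 : s + t = 1 ∨ 2 ≤ s + t := by omega
      rcases ht1 with h | h
      · obtain rfl : s = 0 := by omega
        obtain rfl : t = 1 := by omega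
        have := (lastFree_succ (m + 1) ((β + 1).choose (m + 1) + u')).2
        rw [zero_add, lastFree_one, lastFree_zero_right, add_comm 1]
        omega
      · obtain ⟨γ, l, g1, g2, g3, g4⟩ := exists_block_pos m h
        have hγ : γ ≤ β := by
          by_contra hc
          have := Nat.choose_le_choose (m + 1) (show β + 1 + 1 ≤ γ + 1 by omega)
          omega
        have hγB := Nat.choose_le_choose m (show γ + 1 ≤ β + 1 by omega)
        by_cases hs : (γ + 1).choose (m + 1) ≤ s
        · -- The competing window lies in a single block.
          obtain ⟨s', rfl⟩ := Nat.exists_eq_add_of_le hs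
          rw [show t + ((β + 1).choose (m + 1) + u') = (β + 1).choose (m + 1) + (t + u') by omega,
            add_assoc,
            lastFree_block (r := t + u') (by omega) (by omega),
            lastFree_block (r := s') (by omega) (by omega),
            lastFree_block (r := s' + t) (by omega) (by omega),
            lastFree_block (r := u') (by omega) (by omega)]
          have := hT (β + 1) s' t u' (by omega) (by omega) (by omega)
          omega
        · -- The competing window ends with an initial piece of a block.
          obtain ⟨l1, hl1⟩ := Nat.exists_eq_add_of_lt (not_le.1 hs)
          obtain rfl : t = l1 + 1 + l := by omega
          have e1 := iht (l1 + 1) (by omega) s ((β + 1).choose (m + 1) + (u' + l))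
            (by omega) (by omega)
          rw [show l1 + 1 + ((β + 1).choose (m + 1) + (u' + l))
            = l1 + 1 + l + ((β + 1).choose (m + 1) + u') by omega,
            show s + (l1 + 1) = (γ + 1).choose (m + 1) by omega,
            lastFree_block (r := u' + l) (by omega) (by omega), lastFree_choose (by omega)] at e1
          have e2 := hS u' l
          rw [g4, lastFree_block (r := l) (by omega) (by omega),
            lastFree_block (r := u') (by omega) (by omega)]
          omega

lemma lastFree_le_succ {m : ℕ} (hS : Subadd m) (y : ℕ) : lastFree m y ≤ lastFree (m + 1) y := by
  induction y using Nat.strong_induction_on with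
  | _ y ih =>
  have : y = 0 ∨ y = 1 ∨ 2 ≤ y := by omega
  rcases this with rfl | rfl | h
  · simp [lastFree_zero_right]
  · rw [lastFree_one]; exact lastFree_le m 1
  · obtain ⟨γ, l, g1, g2, g3, rfl⟩ := exists_block_pos m h
    have e1 := ih ((γ + 1).choose (m + 1)) (by omega)
    rw [lastFree_choose g1] at e1
    rw [lastFree_block g1 g3]
    have := hS ((γ + 1).choose (m + 1)) l
    omega

lemma subadd_succ {m : ℕ} (hS : Subadd m) (hT : FinalMin (m + 1)) : Subadd (m + 1) := by
  have key : ∀ y x, y ≤ x →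
      lastFree (m + 1) (x + y) ≤ lastFree (m + 1) x + lastFree (m + 1) y := by
    intro y
    induction y using Nat.strong_induction_on with
    | _ y ih =>
    intro x hx
    rcases Nat.eq_zero_or_pos x with rfl | hx0
    · obtain rfl : y = 0 := by omega
      simp
    · obtain ⟨β, r, g1, g2, hxe⟩ := exists_block_lt m hx0
      by_cases hb : r + y ≤ (β + 1).choose m
      · rw [hxe, add_assoc, lastFree_block g1 hb, lastFree_block g1 g2.le]
        have e1 := hS r y
        have e2 := lastFree_le_succ hS y
        omega
      · -- Cut the window at the end of the block of `x`.
        obtain ⟨t, ht⟩ := Nat.exists_eq_add_of_lt g2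
        obtain ⟨y', rfl⟩ : ∃ y', y = (t + 1) + y' := ⟨y - (t + 1), by omega⟩
        have hN := Nat.choose_succ_succ' (β + 1) m
        have e1 := ih y' (by omega) (t + 1 + x) (by omega)
        have e2 := hT (β + 1 + 1) y' (t + 1) x (by omega) (by omega) (by omega)
        rw [show x + (t + 1 + y') = t + 1 + x + y' by ring, add_comm (t + 1) y']
        omega
  intro x y
  rcases le_total y x with h | h
  · exact key y x h
  · rw [Nat.add_comm x, Nat.add_comm (lastFree _ x)]; exact key x y h

lemma finalMin_and_subadd (m : ℕ) : FinalMin m ∧ Subadd m := by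
  induction m with
  | zero => exact ⟨fun _ _ _ _ _ _ _ => by simp [lastFree], fun _ _ => by simp [lastFree]⟩
  | succ m ih =>
    have h := finalMin_succ ih.1 ih.2
    exact ⟨h, subadd_succ ih.2 h⟩

/-- A mixed subadditivity: in the range `a + b ≤ a^{<m+1>}` the second summand may be measured in
one variable fewer. -/
lemma lastFree_mixed (m : ℕ) {a b : ℕ} (hab : a + b ≤ macUp (m + 1) a) :
    lastFree (m + 1) (a + b) ≤ lastFree (m + 1) a + lastFree m b := by
  rcases Nat.eq_zero_or_pos a with rfl | ha
  · rw [macUp_zero_right] at hab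
    obtain rfl : b = 0 := by omega
    simp
  induction m generalizing a b with
  | zero =>
    have e1 : ∀ x, 0 < x → lastFree 1 x = 1 := by
      intro x hx
      obtain ⟨β, r, g1, g2, rfl⟩ := exists_block_lt 0 hx
      rw [lastFree_block g1 g2.le]; simp [lastFree]
    rw [e1 _ ha, e1 _ (by omega)]; omega
  | succ m ih =>
    obtain ⟨β, r, g1, g2, rfl⟩ := exists_block_lt (m + 1) ha
    obtain ⟨hT, hS⟩ := finalMin_and_subadd (m + 1)
    have hN := Nat.choose_succ_succ' (β + 1) (m + 1)
    by_cases hb : r + b ≤ (β + 1).choose (m + 1)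
    · rw [Nat.add_assoc (Nat.choose _ _), lastFree_block g1 hb, lastFree_block g1 g2.le]
      have := hS r b
      omega
    · obtain ⟨s, hs⟩ := Nat.exists_eq_add_of_lt (not_le.1 hb)
      have hs2 : s + 1 ≤ macUp (m + 1) r := by
        rw [macUp_block g1 g2.le] at hab
        omega
      have hs3 : s + 1 ≤ (β + 1 + 1).choose (m + 1) := by
        refine hs2.trans ?_
        rw [← macUp_choose (show m + 1 ≤ β + 1 by omega)]
        exact (macUp_strictMono _).monotone g2.le
      rw [lastFree_block g1 g2.le,
        show (β + 1).choose (m + 1 + 1) + r + b = (β + 1 + 1).choose (m + 1 + 1) + (s + 1) by omega,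
        lastFree_block (by omega) hs3, Nat.choose_succ_succ']
      have hFN := lastFree_choose (show m ≤ β by omega)
      rcases le_total r (s + 1) with h | h
      · obtain ⟨k, hk⟩ := Nat.exists_eq_add_of_le h
        have hk2 : k ≤ (β + 1).choose m := by
          rw [macUp_eq] at hs2
          have e1 : macUp m (lastFree (m + 1) r) ≤ macUp m (β.choose m) := by
            apply (macUp_strictMono _).monotone
            rw [← hFN]; exact lastFree_mono _ g2.le
          rw [macUp_choose (by omega)] at e1
          omega
        rw [show b = (β + 1).choose (m + 1) + k by omega, lastFree_block (by omega) hk2, hk]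
        rcases Nat.eq_zero_or_pos r with rfl | hr
        · rw [macUp_zero_right] at hs2; omega
        · have := ih (a := r) (b := k) (by omega) hr
          omega
      · obtain ⟨k, hk⟩ := Nat.exists_eq_add_of_le h
        have e := hT (β + 1) (s + 1) k b (by omega) (by omega) (by omega)
        rw [show k + b = (β + 1).choose (m + 1) by omega, hFN, ← hk] at e
        omega

/-! ### The two-term inequality for `h^{<m>}` and its equality case -/

lemma mixed_condition {m a b : ℕ} (hab : a + b ≤ macUp (m + 1 + 1) a) :
    lastFree (m + 1 + 1) a + lastFree (m + 1) b ≤ macUp (m + 1) (lastFree (m + 1 + 1) a) := by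
  rw [macUp_eq] at hab
  have h1 : lastFree (m + 1) b ≤ lastFree (m + 1) (macUp (m + 1) (lastFree (m + 1 + 1) a)) :=
    lastFree_mono _ (by omega)
  rw [lastFree_macUp] at h1
  rw [macUp_eq]; omega

lemma macUp_one {x : ℕ} (hx : 0 < x) : macUp 1 x = x + 1 := by
  simpa using macUp_choose (show 1 ≤ x from hx)

lemma macUp_mixed (m : ℕ) {a b : ℕ} (hab : a + b ≤ macUp (m + 1) a) :
    macUp (m + 1) (a + b) ≤ macUp (m + 1) a + macUp m b := by
  induction m generalizing a b with
  | zero =>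
    rcases Nat.eq_zero_or_pos a with rfl | ha
    · rw [macUp_zero_right] at hab
      obtain rfl : b = 0 := by omega
      simp
    · rw [macUp_one ha, macUp_one (by omega)]; simp only [macUp]; omega
  | succ m ih =>
    have h1 := (macUp_strictMono (m + 1)).monotone (lastFree_mixed (m + 1) hab)
    have h2 := ih (mixed_condition hab)
    rw [macUp_eq (m + 1), macUp_eq (m + 1), macUp_eq m b]
    omega

/-- Persistence: an equality in `macUp_mixed` is inherited by the next degree. -/
lemma macUp_mixed_persist (m : ℕ) {a b : ℕ} (hab : a + b ≤ macUp (m + 1) a)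
    (heq : macUp (m + 1) (a + b) = macUp (m + 1) a + macUp m b) :
    macUp (m + 1) (macUp (m + 1) (a + b))
      = macUp (m + 1) (macUp (m + 1) a) + macUp m (macUp m b) := by
  induction m generalizing a b with
  | zero =>
    rcases Nat.eq_zero_or_pos a with rfl | ha
    · rw [macUp_zero_right] at hab
      obtain rfl : b = 0 := by omega
      simp [macUp_zero_right]
    · rw [macUp_one ha, macUp_one (x := a + b) (by omega), macUp_one (by omega),
        macUp_one (by omega)]
      simp only [macUp]; omega
  | succ m ih =>
    have h0 := lastFree_mixed (m + 1) hab
    have h2 := macUp_mixed m (mixed_condition hab)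
    have h3 : lastFree (m + 1 + 1) (a + b) = lastFree (m + 1 + 1) a + lastFree (m + 1) b := by
      refine h0.antisymm (not_lt.1 fun hlt => ?_)
      have := macUp_strictMono (m + 1) hlt
      rw [macUp_eq (m + 1), macUp_eq (m + 1), macUp_eq m b] at heq
      omega
    have h4 : macUp (m + 1) (lastFree (m + 1 + 1) a + lastFree (m + 1) b)
        = macUp (m + 1) (lastFree (m + 1 + 1) a) + macUp m (lastFree (m + 1) b) := by
      rw [← h3]
      rw [macUp_eq (m + 1), macUp_eq (m + 1), macUp_eq m b] at heq
      omega
    have h5 := ih (mixed_condition hab) h4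
    rw [macUp_eq (m + 1) (macUp _ _), macUp_eq (m + 1) (macUp _ a), macUp_eq m (macUp _ b),
      lastFree_macUp, lastFree_macUp, lastFree_macUp, h3, h5, heq]
    omega

/-- The hypothesis of the two-term inequality holds as soon as `b < (a + b)_{<<m+1>>}`. -/
lemma le_macUp_of_lt {m a b : ℕ} (h : b < lastFree (m + 1) (a + b)) :
    a + b ≤ macUp (m + 1) a := by
  by_contra hc
  obtain ⟨k, hk⟩ := Nat.exists_eq_add_of_lt (not_le.1 hc)
  have h1 := lastFree_add_le (m + 1) (macUp (m + 1) a) (k + 1)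
  rw [lastFree_macUp] at h1
  have h2 := macUp_eq m a
  rw [show macUp (m + 1) a + (k + 1) = a + b by omega] at h1
  omega

/-! ### Shadows -/

/-- The set `{x_j v : v ∈ V, j ∈ S}`. -/
def shadOn {n : ℕ} (S : Finset (Fin n)) (V : Finset (Fin n → ℕ)) : Finset (Fin n → ℕ) :=
  (S ×ˢ V).image fun p => p.2 + Pi.single p.1 1

lemma mem_shadOn {n : ℕ} {S : Finset (Fin n)} {V : Finset (Fin n → ℕ)} {w : Fin n → ℕ} :
    w ∈ shadOn S V ↔ ∃ j ∈ S, ∃ v ∈ V, v + Pi.single j 1 = w := by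
  simp only [shadOn, mem_image, mem_product, Prod.exists]
  constructor
  · rintro ⟨j, v, ⟨h1, h2⟩, h3⟩; exact ⟨j, h1, v, h2, h3⟩
  · rintro ⟨j, h1, v, h2, h3⟩; exact ⟨j, v, ⟨h1, h2⟩, h3⟩

lemma mem_mulVar {n : ℕ} {i : Fin n} {V : Finset (Fin n → ℕ)} {w : Fin n → ℕ} :
    w ∈ mulVar i V ↔ ∃ v ∈ V, v + Pi.single i 1 = w := by
  simp [mulVar]

lemma card_mulVar {n : ℕ} (i : Fin n) (V : Finset (Fin n → ℕ)) : (mulVar i V).card = V.card :=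
  card_image_of_injective _ fun _ _ h => add_right_cancel h

section Split

variable {n : ℕ} {S : Finset (Fin n)} {V : Finset (Fin n → ℕ)} {i : Fin n} {k : ℕ}

lemma card_shadOn_split :
    ((shadOn S V).filter fun w => k < w i).card + ((shadOn S V).filter fun w => ¬ k < w i).card
      = (shadOn S V).card :=
  card_filter_add_card_filter_not _

lemma card_split :
    (V.filter fun v => k < v i).card + (V.filter fun v => ¬ k < v i).card = V.card :=
  card_filter_add_card_filter_not _

lemma mulVar_subset (hi : i ∈ S) (hk : ∀ v ∈ V, k ≤ v i) :
    mulVar i V ⊆ (shadOn S V).filter fun w => k < w i := by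
  intro w hw
  obtain ⟨v, hv, rfl⟩ := mem_mulVar.1 hw
  refine mem_filter.2 ⟨mem_shadOn.2 ⟨i, hi, v, hv, rfl⟩, ?_⟩
  have := hk v hv
  simp; omega

lemma shadOn_high_subset :
    shadOn S (V.filter fun v => k < v i) ⊆ (shadOn S V).filter fun w => k < w i := by
  intro w hw
  obtain ⟨j, hj, v, hv, rfl⟩ := mem_shadOn.1 hw
  rw [mem_filter] at hv
  refine mem_filter.2 ⟨mem_shadOn.2 ⟨j, hj, v, hv.1, rfl⟩, ?_⟩
  rw [Pi.add_apply]; omega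

lemma shadOn_low_subset :
    shadOn (S.erase i) (V.filter fun v => ¬ k < v i)
      ⊆ (shadOn S V).filter fun w => ¬ k < w i := by
  intro w hw
  obtain ⟨j, hj, v, hv, rfl⟩ := mem_shadOn.1 hw
  rw [mem_filter] at hv
  rw [mem_erase] at hj
  refine mem_filter.2 ⟨mem_shadOn.2 ⟨j, hj.2, v, hv.1, rfl⟩, ?_⟩
  rw [Pi.add_apply, Pi.single_eq_of_ne (Ne.symm hj.1)]
  simpa using hv.2

end Split

/-- Macaulay's lower bound for the size of the shadow, in the variables indexed by `S`, of a finite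
(not necessarily homogeneous) set of monomials. -/
theorem macUp_card_le {n : ℕ} (m : ℕ) (S : Finset (Fin n)) (hS : S.card = m + 1)
    (V : Finset (Fin n → ℕ)) : macUp m V.card ≤ (shadOn S V).card := by
  induction m generalizing S V with
  | zero =>
    obtain ⟨i, rfl⟩ := card_eq_one.1 hS
    rw [← card_mulVar i V]
    simp only [macUp]
    refine card_le_card fun w hw => ?_
    obtain ⟨v, hv, rfl⟩ := mem_mulVar.1 hw
    exact mem_shadOn.2 ⟨i, by simp, v, hv, rfl⟩
  | succ m ih =>
    obtain ⟨i, hi⟩ : S.Nonempty := card_pos.1 (by omega)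
    have hE : (S.erase i).card = m + 1 := by rw [card_erase_of_mem hi]; omega
    -- Induction on the length `N` of an interval containing all exponents of the variable `x_i`.
    have key : ∀ N k, ∀ V : Finset (Fin n → ℕ), (∀ v ∈ V, k ≤ v i ∧ v i < k + N) →
        macUp (m + 1) V.card ≤ (shadOn S V).card := by
      intro N
      induction N with
      | zero =>
        intro k V hV
        have : V = ∅ := eq_empty_of_forall_notMem fun v hv => by have := hV v hv; omega
        simp [this, macUp_zero_right]
      | succ N ihN =>
        intro k V hV
        have h1 := card_le_card (mulVar_subset hi fun v hv => (hV v hv).1)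
        rw [card_mulVar] at h1
        have h2 := card_le_card (shadOn_high_subset (S := S) (V := V) (i := i) (k := k))
        have h3 := card_le_card (shadOn_low_subset (S := S) (V := V) (i := i) (k := k))
        have h4 := card_shadOn_split (S := S) (V := V) (i := i) (k := k)
        have h5 := card_split (V := V) (i := i) (k := k)
        have h6 := ih (S.erase i) hE (V.filter fun v => ¬ k < v i)
        have h7 := ihN (k + 1) (V.filter fun v => k < v i) (by
          intro v hv
          rw [mem_filter] at hv
          have := hV v hv.1
          omega)
        by_cases hb : (V.filter fun v => ¬ k < v i).card < lastFree (m + 1) V.card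
        · rw [← h5] at hb
          have := macUp_mixed m (le_macUp_of_lt hb)
          rw [h5] at this
          omega
        · have := (macUp_strictMono m).monotone (not_lt.1 hb)
          rw [macUp_eq]
          omega
    refine key (∑ v ∈ V, v i + 1) 0 V fun v hv => ⟨Nat.zero_le _, ?_⟩
    have := single_le_sum (f := fun v : Fin n → ℕ => v i) (fun _ _ => Nat.zero_le _) hv
    omega

/-- A nonempty set of monomials of degree `d` that is closed under replacing a variable by another
one consists of all monomials of degree `d`. -/
lemma eq_all_of_exchange {n d : ℕ} {V : Finset (Fin n → ℕ)} (hne : V.Nonempty)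
    (hdeg : ∀ v ∈ V, ∑ i, v i = d)
    (hex : ∀ i j, i ≠ j → ∀ v ∈ V, 0 < v i → ∃ u ∈ V, u + Pi.single i 1 = v + Pi.single j 1) :
    V = Finset.Nat.antidiagonalTuple n d := by
  ext w
  rw [Finset.Nat.mem_antidiagonalTuple]
  refine ⟨hdeg w, fun hw => ?_⟩
  -- An element of `V` nearest to `w`.
  obtain ⟨v, hv, hmin⟩ := exists_min_image V (fun v => ∑ i, (v i - w i)) hne
  have hle : ∀ i, v i ≤ w i := by
    by_contra! hc
    obtain ⟨i, hi⟩ := hc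
    have hj : ∃ j, v j < w j := by
      by_contra! hc
      have : ∑ j, w j < ∑ j, v j := sum_lt_sum (fun j _ => hc j) ⟨i, mem_univ i, hi⟩
      rw [hdeg v hv, hw] at this
      omega
    obtain ⟨j, hj⟩ := hj
    have hij : i ≠ j := by rintro rfl; omega
    obtain ⟨u, hu, he⟩ := hex i j hij v hv (by omega)
    have h := hmin u hu
    refine absurd h (not_le.2 (sum_lt_sum (fun l _ => ?_) ⟨i, mem_univ i, ?_⟩))
    · have e := congrFun he l
      simp only [Pi.add_apply, Pi.single_apply] at e
      by_cases hl : l = j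
      · subst hl
        rw [if_neg hij.symm, if_pos rfl] at e
        omega
      · rw [if_neg hl] at e
        split_ifs at e <;> omega
    · have e := congrFun he i
      simp only [Pi.add_apply, Pi.single_apply] at e
      simp only [if_neg hij, if_true] at e
      omega
  have : v = w := by
    funext i
    exact (sum_eq_sum_iff_of_le fun i _ => hle i).1 ((hdeg v hv).trans hw.symm) i (mem_univ i)
  exact this ▸ hv

/-- If every set of monomials of `V` free of a variable is large, then a Gotzmann set `V` is closed
under exchange of variables. -/
lemma exchange_of_forall_ge {m : ℕ} {V : Finset (Fin (m + 2) → ℕ)}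
    (hG : (shadOn univ V).card = macUp (m + 1) V.card) (i j : Fin (m + 2))
    (hD : lastFree (m + 1) V.card ≤ (V.filter fun v => ¬ 0 < v i).card)
    {v : Fin (m + 2) → ℕ} (hv : v ∈ V) (hvi : 0 < v i) :
    ∃ u ∈ V, u + Pi.single i 1 = v + Pi.single j 1 := by
  have hsub := mulVar_subset (S := univ) (V := V) (i := i) (k := 0) (mem_univ i)
    fun _ _ => Nat.zero_le _
  have h3 := card_le_card (shadOn_low_subset (S := univ) (V := V) (i := i) (k := 0))
  have h4 := card_shadOn_split (S := univ) (V := V) (i := i) (k := 0)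
  have h6 := macUp_card_le m (univ.erase i) (by simp) (V.filter fun v => ¬ 0 < v i)
  have h7 := (macUp_strictMono m).monotone hD
  rw [macUp_eq] at hG
  have heq := eq_of_subset_of_card_le hsub (by rw [card_mulVar]; omega)
  rw [← mem_mulVar, heq, mem_filter]
  refine ⟨mem_shadOn.2 ⟨j, mem_univ j, v, hv, rfl⟩, ?_⟩
  rw [Pi.add_apply]; omega

lemma Kset_eq {n : ℕ} {V : Finset (Fin n → ℕ)} (hc : 1 < V.card) (hgcd : gcdMon V = 0)
    (i : Fin n) : Kset V i = V.filter fun v => 0 < v i := by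
  rw [Kset, if_neg (by omega)]
  refine filter_congr fun v _ => ?_
  rw [hgcd]
  constructor
  · intro h
    have := h i
    simp at this
    omega
  · intro h j
    rcases eq_or_ne j i with rfl | hj
    · simp; omega
    · simp [hj]

lemma Dset_eq {n : ℕ} {V : Finset (Fin n → ℕ)} (hc : 1 < V.card) (hgcd : gcdMon V = 0)
    (i : Fin n) : Dset V i = V.filter fun v => ¬ 0 < v i := by
  rw [Dset, Kset_eq hc hgcd, filter_not]

lemma one_lt_card {n d : ℕ} {V : Finset (Fin n → ℕ)} (hne : V.Nonempty)
    (hdeg : ∀ v ∈ V, ∑ i, v i = d) (hgcd : gcdMon V = 0)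
    (hV : V ≠ Finset.Nat.antidiagonalTuple n d) : 1 < V.card := by
  by_contra hc
  obtain ⟨v, rfl⟩ := card_eq_one.1 (le_antisymm (not_lt.1 hc) (card_pos.2 hne))
  have hv : v = 0 := by
    funext i
    have := congrFun hgcd i
    simpa [gcdMon] using this
  subst hv
  refine hV (eq_all_of_exchange hne hdeg fun i j _ v hv h => ?_)
  rw [mem_singleton] at hv
  subst hv
  simp at h

/-- Let `V` be a nonempty Gotzmann set of monomials of degree `d` in
`K[x_1,…,x_n]` with `gcd(V) = 1` and `V ≠ M^d`.  Then there is an `i` such that: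
(i) `K_i(V)` is a Gotzmann set of `K[x_1,…,x_n]`, `D_i(V)` is a Gotzmann set of
`K[x_1,…,x_{i-1},x_{i+1},…,x_n]` (i.e. `|\overline{M_i} D_i(V)| = |D_i(V)|^{<n-2>}`)
and `|D_i(V)| < |V|_{<<n-1>>}`; (ii) `x_i D_i(V) ⊆ \overline{M_i} K_i(V)`;
(iii) `(|K_i(V)|^{<n-1>})^{<n-1>} + (|D_i(V)|^{<n-2>})^{<n-2>} = (|V|^{<n-1>})^{<n-1>}`. -/
theorem exists_good_index {n d : ℕ} (hn : 0 < n) (V : Finset (Fin n → ℕ)) (hne : V.Nonempty)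
    (hdeg : ∀ v ∈ V, ∑ i, v i = d)
    (hG : (shad V).card = macUp (n - 1) V.card)
    (hgcd : gcdMon V = 0) (hV : V ≠ Finset.Nat.antidiagonalTuple n d) :
    ∃ i : Fin n,
      ((shad (Kset V i)).card = macUp (n - 1) (Kset V i).card ∧
          (shadExcept i (Dset V i)).card = macUp (n - 2) (Dset V i).card ∧
            (Dset V i).card < macDDown (n - 1) V.card) ∧
        mulVar i (Dset V i) ⊆ shadExcept i (Kset V i) ∧
          macUp (n - 1) (macUp (n - 1) (Kset V i).card) +
              macUp (n - 2) (macUp (n - 2) (Dset V i).card) =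
            macUp (n - 1) (macUp (n - 1) V.card) := by
  have hc := one_lt_card hne hdeg hgcd hV
  obtain rfl | ⟨m, rfl⟩ : n = 1 ∨ ∃ m, n = m + 2 := by
    rcases n with _ | _ | m
    · omega
    · exact Or.inl rfl
    · exact Or.inr ⟨m, rfl⟩
  · -- In one variable there are no two distinct variables to exchange, so `V` is everything.
    exact absurd (eq_all_of_exchange hne hdeg fun i j hij => absurd (Subsingleton.elim i j) hij) hV
  change (shadOn univ V).card = macUp (m + 1) V.card at hG
  obtain ⟨i, hi⟩ : ∃ i, (V.filter fun v => ¬ 0 < v i).card < lastFree (m + 1) V.card := by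
    by_contra hcon
    exact hV (eq_all_of_exchange hne hdeg fun i j _ v hv hvi =>
      exchange_of_forall_ge hG i j (not_lt.1 fun h => hcon ⟨i, h⟩) hv hvi)
  refine ⟨i, ?_⟩
  rw [Kset_eq hc hgcd, Dset_eq hc hgcd]
  change ((shadOn univ _).card = macUp (m + 1) _ ∧ (shadOn (univ.erase i) _).card = macUp m _ ∧ _)
    ∧ _ ⊆ shadOn (univ.erase i) _ ∧
    macUp (m + 1) (macUp (m + 1) _) + macUp m (macUp m _) = macUp (m + 1) (macUp (m + 1) _)
  have h1 := mulVar_subset (S := univ) (V := V) (i := i) (k := 0) (mem_univ i)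
    fun _ _ => Nat.zero_le _
  have s2 := shadOn_high_subset (S := univ) (V := V) (i := i) (k := 0)
  have h2 := card_le_card s2
  have h3 := card_le_card (shadOn_low_subset (S := univ) (V := V) (i := i) (k := 0))
  have h4 := card_shadOn_split (S := univ) (V := V) (i := i) (k := 0)
  have h5 := card_split (V := V) (i := i) (k := 0)
  have h6 := macUp_card_le m (univ.erase i) (by simp) (V.filter fun v => ¬ 0 < v i)
  have h7 := macUp_card_le (m + 1) univ (by simp) (V.filter fun v => 0 < v i)
  have hcond := hi
  rw [← h5] at hcond
  replace hcond := le_macUp_of_lt hcond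
  have h8 := macUp_mixed m hcond
  have h8' := h8
  rw [h5] at h8'
  refine ⟨⟨by omega, by omega, hi⟩, ?_, ?_⟩
  · -- The part of the shadow divisible by `x_i` is the shadow of `K_i(V)`.
    have heq := eq_of_subset_of_card_le s2 (by omega)
    intro w hw
    obtain ⟨v, hv, rfl⟩ := mem_mulVar.1 hw
    rw [mem_filter] at hv
    have hmem := h1 (mem_mulVar.2 ⟨v, hv.1, rfl⟩)
    rw [← heq] at hmem
    obtain ⟨j, _, u, hu, he⟩ := mem_shadOn.1 hmem
    refine mem_shadOn.2 ⟨j, mem_erase.2 ⟨?_, mem_univ j⟩, u, hu, he⟩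
    rintro rfl
    rw [add_right_cancel he, mem_filter] at hu
    exact hv.2 hu.2
  · have := macUp_mixed_persist m hcond (by rw [h5]; omega)
    rw [h5] at this
    exact this.symm
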